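/- arXiv:0907.1000 — 2 statements merged into one kernel-verified Lean document; each statement's English description precedes it below -/
import Mathlib

section
/- Let Ω ⊆ ℝ² be open, ε > 0, h_ex ∈ ℝ, and let f, h₀ : Ω → ℝ be smooth with Δf = f and Δh₀ = h₀ on Ω; set Z := ∇f − h_ex ∇^⊥ h₀. Suppose v : Ω × ℝ → ℂ and B : Ω × ℝ → ℝ² are smooth and satisfy, pointwise on Ω × ℝ with h' := curl B: ∂_t v + ifv = Δ_B v + (v/ε²)(1−|v|²) + 2i ∇_B v · Z + ivf − v|Z|², and ∂_t B + ∇f = ∇^⊥ h' + (iv, ∇_B v) + |v|²∇f − (|v|²−1) h_ex ∇^⊥ h₀. Then pointwise on Ω × ℝ: ∂_t(div B) = (iv, ∂_t v) + (|v|² − 1) f. -/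
/-!
Subtracting `∇f` from the second equation puts it in the form
`∂_t B = ∇^⊥ h' + (iv, ∇_B v) + (|v|² − 1) Z`. In its divergence the first term disappears, the
supercurrent `(iv, ∇_B v)` contributes `(iv, Δ_B v)` because the connection is metric, and the last
term contributes `∇|v|² · Z + (|v|² − 1) div Z`. In the first equation the two terms `ifv` cancel,
and pairing what is left with `iv` kills every real multiple of `v` and turns the transport term
`2i ∇_B v · Z` into `∇|v|² · Z`; so `(iv, Δ_B v) + ∇|v|² · Z = (iv, ∂_t v)`. Finally
`div Z = Δf = f`.
-/

noncomputable section

open Complex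

/-- Real inner product of two complex numbers: `(a,b) = Re a · Re b + Im a · Im b`. -/
def rip (a b : ℂ) : ℝ := a.re * b.re + a.im * b.im

/-- `(a, X)` for `a : ℂ` and `X : ℂ²`: the vector in `ℝ²` with components `(a,X₁)`, `(a,X₂)`. -/
def ripv (a : ℂ) (X : ℂ × ℂ) : ℝ × ℝ := (rip a X.1, rip a X.2)

/-- Dot product of `X : ℂ²` with `Z : ℝ²`: `X·Z = X₁Z₁ + X₂Z₂ ∈ ℂ`. -/
def cdotR (X : ℂ × ℂ) (Z : ℝ × ℝ) : ℂ := X.1 * (Z.1 : ℂ) + X.2 * (Z.2 : ℂ)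

/-- Euclidean dot product on `ℝ²`. -/
def rdot (a b : ℝ × ℝ) : ℝ := a.1 * b.1 + a.2 * b.2

/-- Perpendicular of a vector: `Z^⊥ = (−Z₂, Z₁)`. -/
def perp (a : ℝ × ℝ) : ℝ × ℝ := (-a.2, a.1)

/-! ### Spatial differential operators for functions on `ℝ²` -/

/-- First spatial partial derivative `∂₁`. -/
def pd1 {E : Type*} [NormedAddCommGroup E] [NormedSpace ℝ E]
    (f : ℝ × ℝ → E) (x : ℝ × ℝ) : E := fderiv ℝ f x (1, 0)

/-- Second spatial partial derivative `∂₂`. -/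
def pd2 {E : Type*} [NormedAddCommGroup E] [NormedSpace ℝ E]
    (f : ℝ × ℝ → E) (x : ℝ × ℝ) : E := fderiv ℝ f x (0, 1)

/-- Gradient `∇g = (∂₁g, ∂₂g)`. -/
def sgrad (g : ℝ × ℝ → ℝ) (x : ℝ × ℝ) : ℝ × ℝ := (pd1 g x, pd2 g x)

/-- Perpendicular gradient `∇^⊥ g = (−∂₂g, ∂₁g)`. -/
def sgradPerp (g : ℝ × ℝ → ℝ) (x : ℝ × ℝ) : ℝ × ℝ := (-(pd2 g x), pd1 g x)

/-- Laplacian `Δg = ∂₁∂₁g + ∂₂∂₂g`. -/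
def slap (g : ℝ × ℝ → ℝ) (x : ℝ × ℝ) : ℝ := pd1 (pd1 g) x + pd2 (pd2 g) x

/-- Curl of a vector field: `curl X = ∂₁X₂ − ∂₂X₁`. -/
def scurl (X : ℝ × ℝ → ℝ × ℝ) (x : ℝ × ℝ) : ℝ := (pd1 X x).2 - (pd2 X x).1

/-- Divergence of a vector field: `div X = ∂₁X₁ + ∂₂X₂`. -/
def sdiv (X : ℝ × ℝ → ℝ × ℝ) (x : ℝ × ℝ) : ℝ := (pd1 X x).1 + (pd2 X x).2

/-- Covariant partial derivative `∂₁^A u = ∂₁u − iA₁u`. -/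
def cpd1 (A : ℝ × ℝ → ℝ × ℝ) (u : ℝ × ℝ → ℂ) (x : ℝ × ℝ) : ℂ :=
  pd1 u x - Complex.I * ((A x).1 : ℂ) * u x

/-- Covariant partial derivative `∂₂^A u = ∂₂u − iA₂u`. -/
def cpd2 (A : ℝ × ℝ → ℝ × ℝ) (u : ℝ × ℝ → ℂ) (x : ℝ × ℝ) : ℂ :=
  pd2 u x - Complex.I * ((A x).2 : ℂ) * u x

/-- Covariant gradient `∇_A u = ∇u − iAu`. -/
def covGrad (A : ℝ × ℝ → ℝ × ℝ) (u : ℝ × ℝ → ℂ) (x : ℝ × ℝ) : ℂ × ℂ :=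
  (cpd1 A u x, cpd2 A u x)

/-- Covariant Laplacian `Δ_A u = ∂₁^A ∂₁^A u + ∂₂^A ∂₂^A u`. -/
def covLap (A : ℝ × ℝ → ℝ × ℝ) (u : ℝ × ℝ → ℂ) (x : ℝ × ℝ) : ℂ :=
  cpd1 A (cpd1 A u) x + cpd2 A (cpd2 A u) x

/-- Vorticity `μ(u,A) = curl((iu, ∇_A u) + A)`. -/
def svort (u : ℝ × ℝ → ℂ) (A : ℝ × ℝ → ℝ × ℝ) (x : ℝ × ℝ) : ℝ :=
  scurl (fun y => ripv (Complex.I * u y) (covGrad A u y) + A y) x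

/-- Ginzburg–Landau energy density
`g⁰_ε(u,A) = ½(|∇_A u|² + (1−|u|²)²/(2ε²) + (curl A)²)`. -/
def glEnergy (ε : ℝ) (u : ℝ × ℝ → ℂ) (A : ℝ × ℝ → ℝ × ℝ) (x : ℝ × ℝ) : ℝ :=
  (1 / 2) * (Complex.normSq (cpd1 A u x) + Complex.normSq (cpd2 A u x)
    + (1 - Complex.normSq (u x)) ^ 2 / (2 * ε ^ 2) + (scurl A x) ^ 2)

/-! ### Space-time differential operators for functions on `ℝ² × ℝ`
(spatial operators act in the spatial variables, `tdt` is the time derivative) -/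

/-- First spatial partial derivative `∂₁`. -/
def sp1 {E : Type*} [NormedAddCommGroup E] [NormedSpace ℝ E]
    (f : (ℝ × ℝ) × ℝ → E) (z : (ℝ × ℝ) × ℝ) : E := fderiv ℝ f z ((1, 0), 0)

/-- Second spatial partial derivative `∂₂`. -/
def sp2 {E : Type*} [NormedAddCommGroup E] [NormedSpace ℝ E]
    (f : (ℝ × ℝ) × ℝ → E) (z : (ℝ × ℝ) × ℝ) : E := fderiv ℝ f z ((0, 1), 0)

/-- Time derivative `∂_t`. -/
def tdt {E : Type*} [NormedAddCommGroup E] [NormedSpace ℝ E]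
    (f : (ℝ × ℝ) × ℝ → E) (z : (ℝ × ℝ) × ℝ) : E := fderiv ℝ f z ((0, 0), 1)

/-- Spatial gradient. -/
def tgrad (g : (ℝ × ℝ) × ℝ → ℝ) (z : (ℝ × ℝ) × ℝ) : ℝ × ℝ := (sp1 g z, sp2 g z)

/-- Spatial perpendicular gradient `∇^⊥ g = (−∂₂g, ∂₁g)`. -/
def tgradPerp (g : (ℝ × ℝ) × ℝ → ℝ) (z : (ℝ × ℝ) × ℝ) : ℝ × ℝ := (-(sp2 g z), sp1 g z)

/-- Spatial Laplacian. -/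
def tlap (g : (ℝ × ℝ) × ℝ → ℝ) (z : (ℝ × ℝ) × ℝ) : ℝ := sp1 (sp1 g) z + sp2 (sp2 g) z

/-- Spatial curl of a time-dependent vector field. -/
def tcurl (X : (ℝ × ℝ) × ℝ → ℝ × ℝ) (z : (ℝ × ℝ) × ℝ) : ℝ := (sp1 X z).2 - (sp2 X z).1

/-- Spatial divergence of a time-dependent vector field. -/
def tdiv (X : (ℝ × ℝ) × ℝ → ℝ × ℝ) (z : (ℝ × ℝ) × ℝ) : ℝ := (sp1 X z).1 + (sp2 X z).2

/-- Covariant partial derivative `∂₁^B w = ∂₁w − iB₁w`. -/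
def tcpd1 (B : (ℝ × ℝ) × ℝ → ℝ × ℝ) (w : (ℝ × ℝ) × ℝ → ℂ) (z : (ℝ × ℝ) × ℝ) : ℂ :=
  sp1 w z - Complex.I * ((B z).1 : ℂ) * w z

/-- Covariant partial derivative `∂₂^B w = ∂₂w − iB₂w`. -/
def tcpd2 (B : (ℝ × ℝ) × ℝ → ℝ × ℝ) (w : (ℝ × ℝ) × ℝ → ℂ) (z : (ℝ × ℝ) × ℝ) : ℂ :=
  sp2 w z - Complex.I * ((B z).2 : ℂ) * w z

/-- Covariant gradient `∇_B w = ∇w − iBw` (spatial). -/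
def tcovGrad (B : (ℝ × ℝ) × ℝ → ℝ × ℝ) (w : (ℝ × ℝ) × ℝ → ℂ) (z : (ℝ × ℝ) × ℝ) : ℂ × ℂ :=
  (tcpd1 B w z, tcpd2 B w z)

/-- Covariant Laplacian `Δ_B w`. -/
def tcovLap (B : (ℝ × ℝ) × ℝ → ℝ × ℝ) (w : (ℝ × ℝ) × ℝ → ℂ) (z : (ℝ × ℝ) × ℝ) : ℂ :=
  tcpd1 B (tcpd1 B w) z + tcpd2 B (tcpd2 B w) z

/-- Covariant time derivative `∂_ξ w = ∂_t w + iξw`. -/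
def covt (ξ : (ℝ × ℝ) × ℝ → ℝ) (w : (ℝ × ℝ) × ℝ → ℂ) (z : (ℝ × ℝ) × ℝ) : ℂ :=
  tdt w z + Complex.I * (ξ z : ℂ) * w z

/-- Vorticity `μ(w,B) = curl((iw, ∇_B w) + B)`. -/
def tvort (w : (ℝ × ℝ) × ℝ → ℂ) (B : (ℝ × ℝ) × ℝ → ℝ × ℝ) (z : (ℝ × ℝ) × ℝ) : ℝ :=
  tcurl (fun y => ripv (Complex.I * w y) (tcovGrad B w y) + B y) z

/-- Velocity `V(w,B,ξ) = ∇(iw,∂_ξ w) − ∂_t(iw,∇_B w) − (∂_t B + ∇ξ)`. -/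
def tvel (w : (ℝ × ℝ) × ℝ → ℂ) (B : (ℝ × ℝ) × ℝ → ℝ × ℝ) (ξ : (ℝ × ℝ) × ℝ → ℝ)
    (z : (ℝ × ℝ) × ℝ) : ℝ × ℝ :=
  tgrad (fun y => rip (Complex.I * w y) (covt ξ w y)) z
    - tdt (fun y => ripv (Complex.I * w y) (tcovGrad B w y)) z
    - (tdt B z + tgrad ξ z)

/-- Time-dependent Ginzburg–Landau energy density. -/
def tglEnergy (ε : ℝ) (w : (ℝ × ℝ) × ℝ → ℂ) (B : (ℝ × ℝ) × ℝ → ℝ × ℝ)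
    (z : (ℝ × ℝ) × ℝ) : ℝ :=
  (1 / 2) * (Complex.normSq (tcpd1 B w z) + Complex.normSq (tcpd2 B w z)
    + (1 - Complex.normSq (w z)) ^ 2 / (2 * ε ^ 2) + (tcurl B z) ^ 2)

section SecondDerivatives

variable {𝕜 E F : Type*} [NontriviallyNormedField 𝕜] [NormedAddCommGroup E] [NormedSpace 𝕜 E]
  [NormedAddCommGroup F] [NormedSpace 𝕜 F] {g : E → F} {z : E} {m n : WithTop ℕ∞}

lemma contDiffAt_fderiv_apply_const (hg : ContDiffAt 𝕜 n g z) (hmn : m + 1 ≤ n) (a : E) :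
    ContDiffAt 𝕜 m (fun y => fderiv 𝕜 g y a) z :=
  (hg.fderiv_right hmn).clm_apply contDiffAt_const

lemma differentiableAt_fderiv_apply_const (hg : ContDiffAt 𝕜 n g z) (hn : 2 ≤ n) (a : E) :
    DifferentiableAt 𝕜 (fun y => fderiv 𝕜 g y a) z :=
  (contDiffAt_fderiv_apply_const (m := 1) hg (by simpa [one_add_one_eq_two]) a).differentiableAt
    one_ne_zero

lemma fderiv_fderiv_apply_comm (hg : ContDiffAt 𝕜 n g z) (hn : minSmoothness 𝕜 2 ≤ n) (a b : E) :
    fderiv 𝕜 (fun y => fderiv 𝕜 g y a) z b = fderiv 𝕜 (fun y => fderiv 𝕜 g y b) z a := by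
  have hdiff : DifferentiableAt 𝕜 (fderiv 𝕜 g) z :=
    (hg.fderiv_right (m := 1) (by
      simpa [one_add_one_eq_two] using le_minSmoothness.trans hn)).differentiableAt one_ne_zero
  have happly (c : E) :
      fderiv 𝕜 (fun y => fderiv 𝕜 g y c) z = (fderiv 𝕜 (fderiv 𝕜 g) z).flip c := by
    simp [fderiv_clm_apply hdiff (differentiableAt_const c)]
  rw [happly, happly]
  exact hg.isSymmSndFDerivAt hn b a

end SecondDerivatives

section PlanarFields

variable {g h : ℝ × ℝ → ℝ} {X Y : ℝ × ℝ → ℝ × ℝ} {x : ℝ × ℝ}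

lemma sdiv_mk {g₁ g₂ : ℝ × ℝ → ℝ} (h₁ : DifferentiableAt ℝ g₁ x) (h₂ : DifferentiableAt ℝ g₂ x) :
    sdiv (fun y => (g₁ y, g₂ y)) x = pd1 g₁ x + pd2 g₂ x := by
  simp only [sdiv, pd1, pd2, h₁.fderiv_prodMk h₂, ContinuousLinearMap.prod_apply]

lemma sdiv_sub_const_smul (hX : DifferentiableAt ℝ X x) (hY : DifferentiableAt ℝ Y x) (c : ℝ) :
    sdiv (fun y => X y - c • Y y) x = sdiv X x - c * sdiv Y x := by
  simp only [sdiv, pd1, pd2, fderiv_fun_sub hX (hY.fun_const_smul c), fderiv_fun_const_smul hY,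
    sub_apply, smul_apply, Prod.fst_sub, Prod.snd_sub, Prod.smul_fst, Prod.smul_snd, smul_eq_mul]
  ring

lemma differentiableAt_sgrad (hg : ContDiffAt ℝ 2 g x) : DifferentiableAt ℝ (sgrad g) x :=
  (differentiableAt_fderiv_apply_const hg le_rfl _).prodMk
    (differentiableAt_fderiv_apply_const hg le_rfl _)

lemma differentiableAt_sgradPerp (hg : ContDiffAt ℝ 2 g x) : DifferentiableAt ℝ (sgradPerp g) x :=
  (differentiableAt_fderiv_apply_const hg le_rfl _).neg.prodMk
    (differentiableAt_fderiv_apply_const hg le_rfl _)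

lemma sdiv_sgrad (hg : ContDiffAt ℝ 2 g x) : sdiv (sgrad g) x = slap g x :=
  sdiv_mk (differentiableAt_fderiv_apply_const hg le_rfl _)
    (differentiableAt_fderiv_apply_const hg le_rfl _)

lemma sdiv_sgradPerp (hg : ContDiffAt ℝ 2 g x) : sdiv (sgradPerp g) x = 0 := by
  have hcomm : pd1 (pd2 g) x = pd2 (pd1 g) x := fderiv_fderiv_apply_comm hg (by simp) _ _
  calc sdiv (sgradPerp g) x
      = pd1 (fun y => -pd2 g y) x + pd2 (pd1 g) x :=
        sdiv_mk (differentiableAt_fderiv_apply_const hg le_rfl _).neg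
          (differentiableAt_fderiv_apply_const hg le_rfl _)
    _ = -pd1 (pd2 g) x + pd2 (pd1 g) x := by rw [pd1, fderiv_fun_neg]; rfl
    _ = 0 := by rw [hcomm, neg_add_cancel]

lemma differentiableAt_sgrad_sub_smul_sgradPerp (hg : ContDiffAt ℝ 2 g x)
    (hh : ContDiffAt ℝ 2 h x) (c : ℝ) :
    DifferentiableAt ℝ (fun y => sgrad g y - c • sgradPerp h y) x :=
  (differentiableAt_sgrad hg).sub ((differentiableAt_sgradPerp hh).const_smul c)

lemma sdiv_sgrad_sub_smul_sgradPerp (hg : ContDiffAt ℝ 2 g x) (hh : ContDiffAt ℝ 2 h x) (c : ℝ) :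
    sdiv (fun y => sgrad g y - c • sgradPerp h y) x = slap g x := by
  rw [sdiv_sub_const_smul (differentiableAt_sgrad hg) (differentiableAt_sgradPerp hh),
    sdiv_sgrad hg, sdiv_sgradPerp hh, mul_zero, sub_zero]

end PlanarFields

section SpaceTimeFields

variable {g : (ℝ × ℝ) × ℝ → ℝ} {X Y : (ℝ × ℝ) × ℝ → ℝ × ℝ} {z : (ℝ × ℝ) × ℝ}

lemma tdiv_comp_fst {W : ℝ × ℝ → ℝ × ℝ} (hW : DifferentiableAt ℝ W z.1) :
    tdiv (fun y => W y.1) z = sdiv W z.1 := by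
  have hcomp : fderiv ℝ (fun y : (ℝ × ℝ) × ℝ => W y.1) z
      = (fderiv ℝ W z.1).comp (ContinuousLinearMap.fst ℝ (ℝ × ℝ) ℝ) :=
    (hW.hasFDerivAt.comp z hasFDerivAt_fst).fderiv
  simp only [tdiv, sdiv, sp1, sp2, pd1, pd2, hcomp, ContinuousLinearMap.comp_apply,
    ContinuousLinearMap.coe_fst']

lemma tdiv_mk {g₁ g₂ : (ℝ × ℝ) × ℝ → ℝ} (h₁ : DifferentiableAt ℝ g₁ z)
    (h₂ : DifferentiableAt ℝ g₂ z) : tdiv (fun y => (g₁ y, g₂ y)) z = sp1 g₁ z + sp2 g₂ z := by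
  simp only [tdiv, sp1, sp2, h₁.fderiv_prodMk h₂, ContinuousLinearMap.prod_apply]

lemma tdiv_add (hX : DifferentiableAt ℝ X z) (hY : DifferentiableAt ℝ Y z) :
    tdiv (fun y => X y + Y y) z = tdiv X z + tdiv Y z := by
  simp only [tdiv, sp1, sp2, fderiv_fun_add hX hY, add_apply, Prod.fst_add, Prod.snd_add]
  ring

lemma tdiv_smul (hg : DifferentiableAt ℝ g z) (hX : DifferentiableAt ℝ X z) :
    tdiv (fun y => g y • X y) z = rdot (tgrad g z) (X z) + g z * tdiv X z := by
  simp only [tdiv, rdot, tgrad, sp1, sp2, fderiv_fun_smul hg hX, add_apply, smul_apply,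
    ContinuousLinearMap.smulRight_apply, Prod.fst_add, Prod.snd_add, Prod.smul_fst, Prod.smul_snd,
    smul_eq_mul]
  ring

lemma contDiffAt_tcurl (hX : ContDiffAt ℝ 3 X z) : ContDiffAt ℝ 2 (tcurl X) z :=
  (contDiffAt_fderiv_apply_const hX (by norm_num) _).snd.sub
    (contDiffAt_fderiv_apply_const hX (by norm_num) _).fst

lemma differentiableAt_tgradPerp (hg : ContDiffAt ℝ 2 g z) : DifferentiableAt ℝ (tgradPerp g) z :=
  (differentiableAt_fderiv_apply_const hg le_rfl _).neg.prodMk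
    (differentiableAt_fderiv_apply_const hg le_rfl _)

lemma tdiv_tgradPerp (hg : ContDiffAt ℝ 2 g z) : tdiv (tgradPerp g) z = 0 := by
  have hcomm : sp1 (sp2 g) z = sp2 (sp1 g) z := fderiv_fderiv_apply_comm hg (by simp) _ _
  calc tdiv (tgradPerp g) z
      = sp1 (fun y => -sp2 g y) z + sp2 (sp1 g) z :=
        tdiv_mk (differentiableAt_fderiv_apply_const hg le_rfl _).neg
          (differentiableAt_fderiv_apply_const hg le_rfl _)
    _ = -sp1 (sp2 g) z + sp2 (sp1 g) z := by rw [sp1, fderiv_fun_neg]; rfl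
    _ = 0 := by rw [hcomm, neg_add_cancel]

lemma tdt_tdiv (hX : ContDiffAt ℝ 2 X z) : tdt (tdiv X) z = tdiv (tdt X) z := by
  have hX₁ : DifferentiableAt ℝ (sp1 X) z := differentiableAt_fderiv_apply_const hX le_rfl _
  have hX₂ : DifferentiableAt ℝ (sp2 X) z := differentiableAt_fderiv_apply_const hX le_rfl _
  have hcomm₁ : tdt (sp1 X) z = sp1 (tdt X) z := fderiv_fderiv_apply_comm hX (by simp) _ _
  have hcomm₂ : tdt (sp2 X) z = sp2 (tdt X) z := fderiv_fderiv_apply_comm hX (by simp) _ _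
  calc tdt (tdiv X) z
      = (tdt (sp1 X) z).1 + (tdt (sp2 X) z).2 :=
        congrArg (· ((0, 0), 1)) (hX₁.hasFDerivAt.fst.add hX₂.hasFDerivAt.snd).fderiv
    _ = tdiv (tdt X) z := by rw [hcomm₁, hcomm₂, tdiv]

end SpaceTimeFields

section RealPairing

lemma rip_eq_inner (a b : ℂ) : rip a b = inner ℝ a b := by
  simp [rip, Complex.inner, mul_comm]

lemma rip_self (a : ℂ) : rip a a = normSq a :=
  (normSq_apply a).symm

lemma rip_add_right (a b c : ℂ) : rip a (b + c) = rip a b + rip a c := by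
  simp only [rip_eq_inner, inner_add_right]

lemma rip_I_mul_ofReal_mul_self (a : ℂ) (r : ℝ) : rip (I * a) (r * a) = 0 := by
  simp only [rip, mul_re, mul_im, I_re, I_im, ofReal_re, ofReal_im]
  ring

lemma rip_I_mul_self (a : ℂ) : rip (I * a) a = 0 := by
  simpa using rip_I_mul_ofReal_mul_self a 1

lemma rip_I_mul_two_I_mul_cdotR (a : ℂ) (X : ℂ × ℂ) (Z : ℝ × ℝ) :
    rip (I * a) (2 * I * cdotR X Z) = rdot ((2 : ℝ) • ripv a X) Z := by
  simp only [rip, cdotR, rdot, ripv, mul_re, mul_im, add_re, add_im, I_re, I_im, ofReal_re,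
    ofReal_im, re_ofNat, im_ofNat, Prod.smul_mk, smul_eq_mul]
  ring

variable {E : Type*} [NormedAddCommGroup E] [NormedSpace ℝ E] {u w : E → ℂ} {z : E}

lemma differentiableAt_rip (hu : DifferentiableAt ℝ u z) (hw : DifferentiableAt ℝ w z) :
    DifferentiableAt ℝ (fun y => rip (u y) (w y)) z := by
  simpa only [rip_eq_inner] using hu.inner ℝ hw

lemma fderiv_rip_apply_covariant (hu : DifferentiableAt ℝ u z) (hw : DifferentiableAt ℝ w z)
    (a : E) (β : ℝ) :
    fderiv ℝ (fun y => rip (u y) (w y)) z a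
      = rip (fderiv ℝ u z a - I * β * u z) (w z) + rip (u z) (fderiv ℝ w z a - I * β * w z) := by
  have hconn : rip (I * β * u z) (w z) + rip (u z) (I * β * w z) = 0 := by
    simp only [rip, mul_re, mul_im, I_re, I_im, ofReal_re, ofReal_im]
    ring
  have hLeibniz := fderiv_inner_apply ℝ hu hw a
  simp only [rip_eq_inner, inner_sub_left, inner_sub_right] at hconn ⊢
  linear_combination hLeibniz + hconn

end RealPairing

section CovariantDerivatives

variable {u w : (ℝ × ℝ) × ℝ → ℂ} {A : (ℝ × ℝ) × ℝ → ℝ × ℝ} {z : (ℝ × ℝ) × ℝ}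

lemma sp1_rip (A : (ℝ × ℝ) × ℝ → ℝ × ℝ) (hu : DifferentiableAt ℝ u z)
    (hw : DifferentiableAt ℝ w z) :
    sp1 (fun y => rip (u y) (w y)) z = rip (tcpd1 A u z) (w z) + rip (u z) (tcpd1 A w z) :=
  fderiv_rip_apply_covariant hu hw _ _

lemma sp2_rip (A : (ℝ × ℝ) × ℝ → ℝ × ℝ) (hu : DifferentiableAt ℝ u z)
    (hw : DifferentiableAt ℝ w z) :
    sp2 (fun y => rip (u y) (w y)) z = rip (tcpd2 A u z) (w z) + rip (u z) (tcpd2 A w z) :=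
  fderiv_rip_apply_covariant hu hw _ _

lemma tcpd1_I_mul (A : (ℝ × ℝ) × ℝ → ℝ × ℝ) (hw : DifferentiableAt ℝ w z) :
    tcpd1 A (fun y => I * w y) z = I * tcpd1 A w z := by
  simp only [tcpd1, sp1, fderiv_const_mul hw, smul_apply, smul_eq_mul]
  ring

lemma tcpd2_I_mul (A : (ℝ × ℝ) × ℝ → ℝ × ℝ) (hw : DifferentiableAt ℝ w z) :
    tcpd2 A (fun y => I * w y) z = I * tcpd2 A w z := by
  simp only [tcpd2, sp2, fderiv_const_mul hw, smul_apply, smul_eq_mul]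
  ring

lemma differentiableAt_tcpd1 (hA : DifferentiableAt ℝ A z) (hw : ContDiffAt ℝ 2 w z) :
    DifferentiableAt ℝ (tcpd1 A w) z :=
  (differentiableAt_fderiv_apply_const hw le_rfl _).sub
    (((ofRealCLM.differentiableAt.comp z hA.fst).const_mul I).mul
      (hw.differentiableAt two_ne_zero))

lemma differentiableAt_tcpd2 (hA : DifferentiableAt ℝ A z) (hw : ContDiffAt ℝ 2 w z) :
    DifferentiableAt ℝ (tcpd2 A w) z :=
  (differentiableAt_fderiv_apply_const hw le_rfl _).sub
    (((ofRealCLM.differentiableAt.comp z hA.snd).const_mul I).mul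
      (hw.differentiableAt two_ne_zero))

lemma differentiableAt_normSq (hw : DifferentiableAt ℝ w z) :
    DifferentiableAt ℝ (fun y => normSq (w y)) z := by
  simpa only [rip_self] using differentiableAt_rip hw hw

lemma tgrad_normSq (A : (ℝ × ℝ) × ℝ → ℝ × ℝ) (hw : DifferentiableAt ℝ w z) :
    tgrad (fun y => normSq (w y)) z = (2 : ℝ) • ripv (w z) (tcovGrad A w z) := by
  have h₁ := sp1_rip A hw hw
  have h₂ := sp2_rip A hw hw
  simp only [rip_self] at h₁ h₂
  ext
  · simp only [tgrad, h₁, ripv, tcovGrad, Prod.smul_fst, smul_eq_mul, rip]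
    ring
  · simp only [tgrad, h₂, ripv, tcovGrad, Prod.smul_snd, smul_eq_mul, rip]
    ring

/-- The supercurrent `(iw, ∇_A w)` of a field `w` coupled to the vector potential `A`: the source
term in the evolution equation of the potential. -/
def supercurrent (w : (ℝ × ℝ) × ℝ → ℂ) (A : (ℝ × ℝ) × ℝ → ℝ × ℝ) (z : (ℝ × ℝ) × ℝ) : ℝ × ℝ :=
  ripv (I * w z) (tcovGrad A w z)

lemma differentiableAt_supercurrent (hw : ContDiffAt ℝ 2 w z) (hA : DifferentiableAt ℝ A z) :
    DifferentiableAt ℝ (supercurrent w A) z :=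
  have hIw := (hw.differentiableAt two_ne_zero).const_mul I
  (differentiableAt_rip hIw (differentiableAt_tcpd1 hA hw)).prodMk
    (differentiableAt_rip hIw (differentiableAt_tcpd2 hA hw))

lemma tdiv_supercurrent (hw : ContDiffAt ℝ 2 w z) (hA : DifferentiableAt ℝ A z) :
    tdiv (supercurrent w A) z = rip (I * w z) (tcovLap A w z) := by
  have hw' : DifferentiableAt ℝ w z := hw.differentiableAt two_ne_zero
  have hIw : DifferentiableAt ℝ (fun y => I * w y) z := hw'.const_mul I
  have h₁ := differentiableAt_tcpd1 hA hw
  have h₂ := differentiableAt_tcpd2 hA hw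
  calc tdiv (supercurrent w A) z
      = sp1 (fun y => rip (I * w y) (tcpd1 A w y)) z
          + sp2 (fun y => rip (I * w y) (tcpd2 A w y)) z :=
        tdiv_mk (differentiableAt_rip hIw h₁) (differentiableAt_rip hIw h₂)
    _ = rip (I * w z) (tcpd1 A (tcpd1 A w) z) + rip (I * w z) (tcpd2 A (tcpd2 A w) z) := by
        rw [sp1_rip A hIw h₁, sp2_rip A hIw h₂, tcpd1_I_mul A hw', tcpd2_I_mul A hw',
          rip_I_mul_self, rip_I_mul_self, zero_add, zero_add]
    _ = rip (I * w z) (tcovLap A w z) := (rip_add_right _ _ _).symm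

end CovariantDerivatives

section Evolution

variable {v : (ℝ × ℝ) × ℝ → ℂ} {B Z : (ℝ × ℝ) × ℝ → ℝ × ℝ} {z : (ℝ × ℝ) × ℝ}

lemma rip_I_mul_tdt {q : ℝ} {ζ : ℝ × ℝ} (hv : DifferentiableAt ℝ v z)
    (heq : tdt v z = tcovLap B v z + 2 * I * cdotR (tcovGrad B v z) ζ + q * v z) :
    rip (I * v z) (tdt v z)
      = rip (I * v z) (tcovLap B v z) + rdot (tgrad (fun y => normSq (v y)) z) ζ := by
  rw [heq, rip_add_right, rip_add_right, rip_I_mul_two_I_mul_cdotR, rip_I_mul_ofReal_mul_self,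
    tgrad_normSq B hv, add_zero]

lemma tdiv_normSq_sub_one_smul (hv : DifferentiableAt ℝ v z) (hZ : DifferentiableAt ℝ Z z) :
    tdiv (fun y => (normSq (v y) - 1) • Z y) z
      = rdot (tgrad (fun y => normSq (v y)) z) (Z z) + (normSq (v z) - 1) * tdiv Z z := by
  rw [tdiv_smul ((differentiableAt_normSq hv).sub_const 1) hZ]
  simp only [tgrad, sp1, sp2, fderiv_sub_const]

theorem div_B_evolution_general {q : ℝ} (hv : ContDiffAt ℝ 2 v z) (hB : ContDiffAt ℝ 3 B z)
    (hZ : DifferentiableAt ℝ Z z)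
    (heq1 : tdt v z = tcovLap B v z + 2 * I * cdotR (tcovGrad B v z) (Z z) + q * v z)
    (heq2 : tdt B =ᶠ[nhds z] fun y =>
      tgradPerp (tcurl B) y + supercurrent v B y + (normSq (v y) - 1) • Z y) :
    tdt (tdiv B) z = rip (I * v z) (tdt v z) + (normSq (v z) - 1) * tdiv Z z := by
  have hv' : DifferentiableAt ℝ v z := hv.differentiableAt two_ne_zero
  have hB' : DifferentiableAt ℝ B z := hB.differentiableAt three_ne_zero
  have hcurl := differentiableAt_tgradPerp (contDiffAt_tcurl hB)
  have hcurrent := differentiableAt_supercurrent hv hB'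
  have hforce : DifferentiableAt ℝ (fun y => (normSq (v y) - 1) • Z y) z :=
    ((differentiableAt_normSq hv').sub_const 1).smul hZ
  calc tdt (tdiv B) z
      = tdiv (tdt B) z := tdt_tdiv (hB.of_le (by norm_num))
    _ = tdiv (fun y =>
          tgradPerp (tcurl B) y + supercurrent v B y + (normSq (v y) - 1) • Z y) z := by
        simp only [tdiv, sp1, sp2, heq2.fderiv_eq]
    _ = rip (I * v z) (tcovLap B v z) + (rdot (tgrad (fun y => normSq (v y)) z) (Z z)
          + (normSq (v z) - 1) * tdiv Z z) := by
        rw [tdiv_add (hcurl.fun_add hcurrent) hforce, tdiv_add hcurl hcurrent,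
          tdiv_tgradPerp (contDiffAt_tcurl hB), tdiv_supercurrent hv hB',
          tdiv_normSq_sub_one_smul hv' hZ, zero_add]
    _ = rip (I * v z) (tdt v z) + (normSq (v z) - 1) * tdiv Z z := by
        rw [rip_I_mul_tdt hv' heq1, add_assoc]

end Evolution

/-- ∂_t(div B) = (iv, ∂_t v) + (|v|² − 1) f for solutions of the
modified equations in the Φ = f gauge. -/
theorem div_B_evolution
(Ω : Set (ℝ × ℝ)) (hΩ : IsOpen Ω) (ε : ℝ) (hε : 0 < ε) (h_ex : ℝ)
    (f h₀ : ℝ × ℝ → ℝ)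
    (hf : ContDiffOn ℝ (⊤ : ℕ∞) f Ω) (hh₀ : ContDiffOn ℝ (⊤ : ℕ∞) h₀ Ω)
    (hΔf : ∀ x ∈ Ω, slap f x = f x) (hΔh₀ : ∀ x ∈ Ω, slap h₀ x = h₀ x)
    (Z : ℝ × ℝ → ℝ × ℝ) (hZ : Z = fun x => sgrad f x - h_ex • sgradPerp h₀ x)
    (v : (ℝ × ℝ) × ℝ → ℂ) (B : (ℝ × ℝ) × ℝ → ℝ × ℝ)
    (hv : ContDiffOn ℝ (⊤ : ℕ∞) v (Ω ×ˢ (Set.univ : Set ℝ)))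
    (hB : ContDiffOn ℝ (⊤ : ℕ∞) B (Ω ×ˢ (Set.univ : Set ℝ)))
    (heq1 : ∀ x ∈ Ω, ∀ t : ℝ,
      tdt v (x, t) + Complex.I * (f x : ℂ) * v (x, t)
        = tcovLap B v (x, t)
          + v (x, t) / (ε ^ 2 : ℂ) * (1 - (Complex.normSq (v (x, t)) : ℂ))
          + 2 * Complex.I * cdotR (tcovGrad B v (x, t)) (Z x)
          + Complex.I * v (x, t) * (f x : ℂ)
          - v (x, t) * ((rdot (Z x) (Z x) : ℝ) : ℂ))
    (heq2 : ∀ x ∈ Ω, ∀ t : ℝ,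
      tdt B (x, t) + sgrad f x
        = tgradPerp (tcurl B) (x, t)
          + ripv (Complex.I * v (x, t)) (tcovGrad B v (x, t))
          + (Complex.normSq (v (x, t))) • sgrad f x
          - ((Complex.normSq (v (x, t)) - 1) * h_ex) • sgradPerp h₀ x) :
    ∀ x ∈ Ω, ∀ t : ℝ,
      tdt (tdiv B) (x, t)
        = rip (Complex.I * v (x, t)) (tdt v (x, t))
          + (Complex.normSq (v (x, t)) - 1) * f x := by
  intro x hx t
  have hU : Ω ×ˢ Set.univ ∈ nhds (x, t) := (hΩ.prod isOpen_univ).mem_nhds ⟨hx, trivial⟩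
  have hf' : ContDiffAt ℝ 2 f x := contDiffAt_infty.1 (hf.contDiffAt (hΩ.mem_nhds hx)) 2
  have hh₀' : ContDiffAt ℝ 2 h₀ x := contDiffAt_infty.1 (hh₀.contDiffAt (hΩ.mem_nhds hx)) 2
  have hv' : ContDiffAt ℝ 2 v (x, t) := contDiffAt_infty.1 (hv.contDiffAt hU) 2
  have hB' : ContDiffAt ℝ 3 B (x, t) := contDiffAt_infty.1 (hB.contDiffAt hU) 3
  have hZ' : DifferentiableAt ℝ Z x := by
    rw [hZ]
    exact differentiableAt_sgrad_sub_smul_sgradPerp hf' hh₀' h_ex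
  have hdivZ : tdiv (fun y => Z y.1) (x, t) = f x := by
    rw [tdiv_comp_fst hZ', hZ, sdiv_sgrad_sub_smul_sgradPerp hf' hh₀', hΔf x hx]
  rw [← hdivZ]
  refine div_B_evolution_general (q := (1 - normSq (v (x, t))) / ε ^ 2 - rdot (Z x) (Z x))
    hv' hB' (DifferentiableAt.comp (g := Z) (x, t) hZ' differentiableAt_fst) ?_ ?_
  · push_cast
    linear_combination heq1 x hx t
  · filter_upwards [hU] with y hy
    rw [supercurrent, hZ]
    linear_combination (norm := module) heq2 y.1 hy.1 y.2

end
end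

section
/- Let Ω ⊆ ℝ² be open, let v : Ω → ℂ be C², and let B : Ω → ℝ² be C¹. Then pointwise on Ω: curl(iv, ∇_B v) + |v|² curl B = −2(∂₁^B v, i∂₂^B v). Equivalently, the vorticity satisfies μ(v,B) = (1 − |v|²) curl B − 2(∂₁^B v, i∂₂^B v). -/
noncomputable section

open Complex

/-! Everything follows from two facts about `∇_B`: it is compatible with the real inner product
of `ℂ`, so that `∂_j (z, w) = (∂_j^B z, w) + (z, ∂_j^B w)`, and its curvature is
`[∂₁^B, ∂₂^B] v = -i (curl B) v`. Differentiating `(iv, ∂_k^B v)` by the first, the first-order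
terms of the curl add up to `-2 (∂₁^B v, i∂₂^B v)`, and the second-order terms form the commutator
paired with `iv`, which is `-|v|² curl B`. -/

theorem rip_eq_inner_s15 (z w : ℂ) : rip z w = inner ℝ z w := by
  rw [rip, Complex.inner, mul_re, conj_re, conj_im]
  ring

theorem real_inner_I_mul_left (z w : ℂ) : inner ℝ (I * z) w = -inner ℝ z (I * w) := by
  simp only [Complex.inner, map_mul, conj_I, ← neg_re]
  ring_nf

theorem real_inner_I_mul_I_mul (z w : ℂ) : inner ℝ (I * z) (I * w) = inner ℝ z w := by
  rw [real_inner_I_mul_left, ← mul_assoc, I_mul_I, neg_one_mul, inner_neg_right, neg_neg]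

theorem differentiableAt_fderiv_of_contDiffAt_two {𝕜 E F : Type*} [NontriviallyNormedField 𝕜]
    [NormedAddCommGroup E] [NormedSpace 𝕜 E] [NormedAddCommGroup F] [NormedSpace 𝕜 F]
    {g : E → F} {x : E} (hg : ContDiffAt 𝕜 2 g x) : DifferentiableAt 𝕜 (fderiv 𝕜 g) x :=
  (hg.fderiv_right (m := 1) one_add_one_eq_two.le).differentiableAt one_ne_zero

/-- The covariant derivative `∂_e u - i a u` of `u : E → ℂ` along `e`, where the real function `a`
is the component along `e` of the connection form. With one coefficient per direction, `cpd1 A`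
and `cpd2 A` are the instances `e = (1, 0)`, `a = A₁` and `e = (0, 1)`, `a = A₂`. -/
def covDirDeriv {E : Type*} [NormedAddCommGroup E] [NormedSpace ℝ E]
    (e : E) (a : E → ℝ) (u : E → ℂ) (x : E) : ℂ :=
  fderiv ℝ u x e - I * a x * u x

section CovariantDerivative

variable {E : Type*} [NormedAddCommGroup E] [NormedSpace ℝ E]
  {e f x : E} {a b : E → ℝ} {u w : E → ℂ}

theorem covDirDeriv_const_mul (c : ℂ) :
    covDirDeriv e a (fun y => c * u y) x = c * covDirDeriv e a u x := by
  have h : fderiv ℝ (fun y => c * u y) x = c • fderiv ℝ u x :=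
    congrFun (fderiv_const_smul_field c) x
  rw [covDirDeriv, covDirDeriv, h, smul_apply, smul_eq_mul]
  ring

theorem fderiv_inner_apply_eq_covDirDeriv (a : E → ℝ)
    (hu : DifferentiableAt ℝ u x) (hw : DifferentiableAt ℝ w x) (e : E) :
    fderiv ℝ (fun y => inner ℝ (u y) (w y)) x e =
      inner ℝ (covDirDeriv e a u x) (w x) + inner ℝ (u x) (covDirDeriv e a w x) := by
  have skew : inner ℝ (I * a x * u x) (w x) = -inner ℝ (u x) (I * a x * w x) := by
    rw [mul_assoc, real_inner_I_mul_left, ← real_smul, real_inner_smul_left,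
      ← real_inner_smul_right, real_smul, mul_left_comm, mul_assoc]
  rw [fderiv_inner_apply ℝ hu hw, covDirDeriv, covDirDeriv, inner_sub_left, inner_sub_right, skew]
  ring

theorem differentiableAt_covDirDeriv (hu : ContDiffAt ℝ 2 u x) (ha : DifferentiableAt ℝ a x) :
    DifferentiableAt ℝ (covDirDeriv e a u) x := by
  have hu₁ : DifferentiableAt ℝ u x := hu.differentiableAt two_ne_zero
  have hu₂ : DifferentiableAt ℝ (fderiv ℝ u) x := differentiableAt_fderiv_of_contDiffAt_two hu
  unfold covDirDeriv
  fun_prop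

theorem covDirDeriv_covDirDeriv (hu : ContDiffAt ℝ 2 u x) (hb : DifferentiableAt ℝ b x) :
    covDirDeriv e a (covDirDeriv f b u) x =
      fderiv ℝ (fderiv ℝ u) x e f - I * (b x * fderiv ℝ u x e + fderiv ℝ b x e * u x)
        - I * a x * covDirDeriv f b u x := by
  have hu₁ : DifferentiableAt ℝ u x := hu.differentiableAt two_ne_zero
  have hu₂ : DifferentiableAt ℝ (fderiv ℝ u) x := differentiableAt_fderiv_of_contDiffAt_two hu
  have hD : covDirDeriv f b u = fun y => fderiv ℝ u y f - I * (b y • u y) := by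
    funext y
    rw [covDirDeriv, mul_assoc, real_smul]
  have hfderiv : fderiv ℝ (covDirDeriv f b u) x e =
      fderiv ℝ (fderiv ℝ u) x e f - I * (b x * fderiv ℝ u x e + fderiv ℝ b x e * u x) := by
    rw [hD, fderiv_fun_sub (by fun_prop) (by fun_prop), fderiv_clm_apply hu₂ (by fun_prop),
      fderiv_const_mul (by fun_prop), fderiv_fun_smul hb hu₁]
    simp [mul_add]
  rw [covDirDeriv, hfderiv]

theorem covDirDeriv_commutator (hu : ContDiffAt ℝ 2 u x)
    (ha : DifferentiableAt ℝ a x) (hb : DifferentiableAt ℝ b x) :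
    covDirDeriv e a (covDirDeriv f b u) x - covDirDeriv f b (covDirDeriv e a u) x =
      -((fderiv ℝ b x e - fderiv ℝ a x f) • (I * u x)) := by
  have hsymm : fderiv ℝ (fderiv ℝ u) x e f = fderiv ℝ (fderiv ℝ u) x f e :=
    (hu.isSymmSndFDerivAt (by simp)).eq e f
  rw [covDirDeriv_covDirDeriv hu hb, covDirDeriv_covDirDeriv hu ha, hsymm, real_smul,
    covDirDeriv, covDirDeriv]
  push_cast
  ring

theorem fderiv_inner_I_mul_covDirDeriv (a : E → ℝ)
    (hu : ContDiffAt ℝ 2 u x) (hb : DifferentiableAt ℝ b x) :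
    fderiv ℝ (fun y => inner ℝ (I * u y) (covDirDeriv f b u y)) x e =
      inner ℝ (I * covDirDeriv e a u x) (covDirDeriv f b u x) +
        inner ℝ (I * u x) (covDirDeriv e a (covDirDeriv f b u) x) := by
  rw [fderiv_inner_apply_eq_covDirDeriv a ((hu.differentiableAt two_ne_zero).const_mul I)
    (differentiableAt_covDirDeriv hu hb), covDirDeriv_const_mul]

theorem fderiv_inner_I_mul_covDirDeriv_sub (hu : ContDiffAt ℝ 2 u x)
    (ha : DifferentiableAt ℝ a x) (hb : DifferentiableAt ℝ b x) :
    fderiv ℝ (fun y => inner ℝ (I * u y) (covDirDeriv f b u y)) x e -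
        fderiv ℝ (fun y => inner ℝ (I * u y) (covDirDeriv e a u y)) x f =
      -2 * inner ℝ (covDirDeriv e a u x) (I * covDirDeriv f b u x) -
        normSq (u x) * (fderiv ℝ b x e - fderiv ℝ a x f) := by
  set p := covDirDeriv e a u x
  set q := covDirDeriv f b u x
  have first_order : inner ℝ (I * p) q - inner ℝ (I * q) p = -2 * inner ℝ p (I * q) := by
    rw [real_inner_I_mul_left p q, real_inner_comm p (I * q)]
    ring
  have second_order :
      inner ℝ (I * u x) (covDirDeriv e a (covDirDeriv f b u) x) -
          inner ℝ (I * u x) (covDirDeriv f b (covDirDeriv e a u) x) =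
        -(normSq (u x) * (fderiv ℝ b x e - fderiv ℝ a x f)) := by
    rw [← inner_sub_right, covDirDeriv_commutator hu ha hb, inner_neg_right,
      real_inner_smul_right, real_inner_I_mul_I_mul, real_inner_self_eq_norm_sq, normSq_eq_norm_sq,
      mul_comm]
  rw [fderiv_inner_I_mul_covDirDeriv a hu hb, fderiv_inner_I_mul_covDirDeriv b hu ha]
  linear_combination first_order + second_order

end CovariantDerivative

section Curl

variable {X Y : ℝ × ℝ → ℝ × ℝ} {x : ℝ × ℝ}

theorem scurl_eq_fderiv_sub (hX : DifferentiableAt ℝ X x) :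
    scurl X x =
      fderiv ℝ (fun y => (X y).2) x (1, 0) - fderiv ℝ (fun y => (X y).1) x (0, 1) := by
  rw [fderiv.fst hX, fderiv.snd hX]
  rfl

theorem scurl_add (hX : DifferentiableAt ℝ X x) (hY : DifferentiableAt ℝ Y x) :
    scurl (fun y => X y + Y y) x = scurl X x + scurl Y x := by
  simp only [scurl, pd1, pd2, fderiv_fun_add hX hY, add_apply, Prod.fst_add, Prod.snd_add]
  ring

end Curl

section Supercurrent

variable {v : ℝ × ℝ → ℂ} {B : ℝ × ℝ → ℝ × ℝ} {x : ℝ × ℝ}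

theorem ripv_I_mul_covGrad (v : ℝ × ℝ → ℂ) (B : ℝ × ℝ → ℝ × ℝ) (y : ℝ × ℝ) :
    ripv (I * v y) (covGrad B v y) =
      (inner ℝ (I * v y) (covDirDeriv (1, 0) (fun z => (B z).1) v y),
        inner ℝ (I * v y) (covDirDeriv (0, 1) (fun z => (B z).2) v y)) := by
  rw [ripv, rip_eq_inner_s15, rip_eq_inner_s15]
  rfl

theorem differentiableAt_ripv_I_mul_covGrad
    (hv : ContDiffAt ℝ 2 v x) (hB : DifferentiableAt ℝ B x) :
    DifferentiableAt ℝ (fun y => ripv (I * v y) (covGrad B v y)) x := by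
  have hv₁ : DifferentiableAt ℝ (fun y => I * v y) x :=
    (hv.differentiableAt two_ne_zero).const_mul I
  simp only [ripv_I_mul_covGrad]
  exact (hv₁.inner ℝ (differentiableAt_covDirDeriv hv hB.fst)).prodMk
    (hv₁.inner ℝ (differentiableAt_covDirDeriv hv hB.snd))

theorem scurl_ripv_I_mul_covGrad (hv : ContDiffAt ℝ 2 v x) (hB : DifferentiableAt ℝ B x) :
    scurl (fun y => ripv (I * v y) (covGrad B v y)) x =
      -2 * rip (cpd1 B v x) (I * cpd2 B v x) - normSq (v x) * scurl B x := by
  rw [scurl_eq_fderiv_sub (differentiableAt_ripv_I_mul_covGrad hv hB), scurl_eq_fderiv_sub hB,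
    rip_eq_inner_s15]
  simp only [ripv_I_mul_covGrad]
  exact fderiv_inner_I_mul_covDirDeriv_sub hv hB.fst hB.snd

theorem curl_supercurrent_identity_general
    (hv : ContDiffAt ℝ 2 v x) (hB : DifferentiableAt ℝ B x) :
    (scurl (fun y => ripv (I * v y) (covGrad B v y)) x + normSq (v x) * scurl B x =
      -2 * rip (cpd1 B v x) (I * cpd2 B v x)) ∧
    svort v B x =
      (1 - normSq (v x)) * scurl B x - 2 * rip (cpd1 B v x) (I * cpd2 B v x) := by
  have hcurl := scurl_ripv_I_mul_covGrad hv hB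
  refine ⟨by rw [hcurl]; ring, ?_⟩
  rw [svort, scurl_add (differentiableAt_ripv_I_mul_covGrad hv hB) hB, hcurl]
  ring

end Supercurrent

/-- `curl(iv, ∇_B v) + |v|² curl B = −2(∂₁^B v, i∂₂^B v)`, and hence
`μ(v,B) = (1 − |v|²) curl B − 2(∂₁^B v, i∂₂^B v)` pointwise on `Ω`. -/
theorem curl_supercurrent_identity
    (Ω : Set (ℝ × ℝ)) (hΩ : IsOpen Ω)
    (v : ℝ × ℝ → ℂ) (B : ℝ × ℝ → ℝ × ℝ)
    (hv : ContDiffOn ℝ 2 v Ω) (hB : ContDiffOn ℝ 1 B Ω) :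
    ∀ x ∈ Ω,
      (scurl (fun y => ripv (Complex.I * v y) (covGrad B v y)) x
          + Complex.normSq (v x) * scurl B x
        = -2 * rip (cpd1 B v x) (Complex.I * cpd2 B v x))
      ∧ svort v B x
        = (1 - Complex.normSq (v x)) * scurl B x
          - 2 * rip (cpd1 B v x) (Complex.I * cpd2 B v x) := by
  intro x hx
  have hΩx : Ω ∈ nhds x := hΩ.mem_nhds hx
  exact curl_supercurrent_identity_general (hv.contDiffAt hΩx)
    ((hB.contDiffAt hΩx).differentiableAt one_ne_zero)

end
end
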